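/- Every union-closed, separating family of sets of dimension two has an abundant element; in fact every optimal element of such a family is abundant. -/

import Mathlib

/-!
In a union-closed family `F`, a chain of members avoiding `x` extends by the union of its top with
a member containing `x`. So the members avoiding `x` have strictly smaller dimension than `F`; if
`F` has dimension at most two, any two distinct ones have the same union `S`, which is the union of
all members avoiding `x`.

Suppose moreover that `x` is optimal. Every `y ∈ S` lies in a member avoiding `x`, hence is missed
by some member `C` containing `x`. So each `A ≠ S` avoiding `x` is included in a member `A ∪ C` that
contains `x` but does not include `S`. Distinct `A` and `A'` never receive the same member in this
way, because it would include `A ∪ A' = S`.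

An optimal element exists: if `F_x ⊂ F_y`, then extending chains inside the members avoiding `x`
shows that the members avoiding `y` have strictly smaller dimension than those avoiding `x`, so any
`x` minimizing this dimension is optimal.
-/

open Order

theorem krullDim_le_two_of_no_four_chain {β : Type*} [Preorder β]
    (h : ∀ a b c d : β, a < b → b < c → ¬ c < d) : krullDim β ≤ 2 := by
  refine iSup_le fun s ↦ ?_
  by_contra! hs
  have hlen : 2 < s.length := by exact_mod_cast hs
  exact h (s ⟨0, by lia⟩) (s ⟨1, by lia⟩) (s ⟨2, by lia⟩) (s ⟨3, by lia⟩)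
    (s.strictMono (by simp [Fin.lt_def])) (s.strictMono (by simp)) (s.strictMono (by simp))

theorem isGreatest_sup_of_krullDim_le_one {β : Type*} [SemilatticeSup β] {T : Set β}
    (hT : SupClosed T) (hdim : krullDim T ≤ 1) {a b : β} (ha : a ∈ T) (hb : b ∈ T)
    (hab : a ≠ b) : IsGreatest T (a ⊔ b) := by
  have hsup : a ⊔ b ∈ T := hT ha hb
  refine ⟨hsup, fun c hc ↦ ?_⟩
  rcases krullDim_le_one_iff.mp hdim ⟨a ⊔ b, hsup⟩ with hmin | hmax
  · have h_le_a : a ⊔ b ≤ a := hmin (b := ⟨a, ha⟩) le_sup_left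
    have h_le_b : a ⊔ b ≤ b := hmin (b := ⟨b, hb⟩) le_sup_right
    exact absurd (le_antisymm (le_sup_left.trans h_le_b) (le_sup_right.trans h_le_a)) hab
  · exact le_sup_right.trans (hmax (b := ⟨a ⊔ b ⊔ c, hT hsup hc⟩) le_sup_left)

section SetFamily

variable {α : Type*} {F : Set (Set α)} {x y : α}

/-- The subfamily `F_x` of the members of `F` containing `x`. -/
def containing (F : Set (Set α)) (x : α) : Set (Set α) := {A ∈ F | x ∈ A}

/-- The subfamily `F \ F_x` of the members of `F` not containing `x`. -/
def avoiding (F : Set (Set α)) (x : α) : Set (Set α) := {A ∈ F | x ∉ A}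

/-- An element `x` of `⋃₀ F` is optimal if `F_x` is inclusion-maximal among the families `F_y`. -/
def IsOptimal (F : Set (Set α)) (x : α) : Prop := MaximalFor (· ∈ ⋃₀ F) (containing F) x

/-- An element `x` is abundant if `F \ F_x` injects into `F_x`; for finite `F` this says that at
least half of the members of `F` contain `x`. -/
def IsAbundant (F : Set (Set α)) (x : α) : Prop :=
  ∃ f : avoiding F x → containing F x, Function.Injective f

theorem supClosed_avoiding (hF : SupClosed F) (x : α) : SupClosed (avoiding F x) :=
  fun _ hA _ hB ↦ ⟨hF hA.1 hB.1, fun hx ↦ hx.elim hA.2 hB.2⟩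

theorem krullDim_avoiding_lt (hF : SupClosed F) (hfin : krullDim F ≠ ⊤) (hx : x ∈ ⋃₀ F) :
    krullDim (avoiding F x) < krullDim F := by
  obtain ⟨C, hC, hxC⟩ := hx
  have : Nonempty F := ⟨C, hC⟩
  obtain ⟨d, hd⟩ := WithBot.ne_bot_iff_exists.mp (krullDim_ne_bot_iff.mpr this)
  lift d to ℕ using by rintro rfl; exact hfin hd.symm
  rw [← hd]
  refine krullDim_lt_coe_iff.mpr fun s ↦ ?_
  let t : LTSeries F := s.map (Set.inclusion (Set.sep_subset F _)) fun _ _ h ↦ h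
  have hx_last : x ∉ (t.last : Set α) := s.last.2.2
  have h_lt : t.last < ⟨t.last ∪ C, hF t.last.2 hC⟩ :=
    ⟨Set.subset_union_left, fun h ↦ hx_last (h (.inr hxC))⟩
  have h_length : ((s.length + 1 : ℕ) : WithBot ℕ∞) ≤ krullDim F :=
    LTSeries.length_le_krullDim (t.snoc _ h_lt)
  rw [← hd] at h_length
  exact_mod_cast h_length

theorem exists_isOptimal (hF : SupClosed F) (hfin : krullDim F ≠ ⊤) (hne : (⋃₀ F).Nonempty) :
    ∃ x, IsOptimal F x := by
  obtain ⟨x, hx, hmin⟩ :=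
    exists_minimalFor_of_wellFoundedLT (· ∈ ⋃₀ F) (fun x ↦ krullDim (avoiding F x)) hne
  refine ⟨x, hx, fun y hy hxy A hA ↦ ⟨hA.1, ?_⟩⟩
  by_contra hxA
  have h_eq : avoiding (avoiding F x) y = avoiding F y := by
    ext B
    exact ⟨fun hB ↦ ⟨hB.1.1, hB.2⟩, fun hB ↦ ⟨⟨hB.1, fun hxB ↦ hB.2 (hxy ⟨hB.1, hxB⟩).2⟩, hB.2⟩⟩
  have hfin_x : krullDim (avoiding F x) ≠ ⊤ :=
    ((krullDim_avoiding_lt hF hfin hx).trans_le le_top).ne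
  have h_lt : krullDim (avoiding F y) < krullDim (avoiding F x) :=
    h_eq ▸ krullDim_avoiding_lt (supClosed_avoiding hF x) hfin_x ⟨A, ⟨hA.1, hxA⟩, hA.2⟩
  exact (hmin hy h_lt.le).not_gt h_lt

theorem IsOptimal.exists_containing_notMem (hx : IsOptimal F x) (hy : y ∈ ⋃₀ avoiding F x) :
    ∃ C ∈ containing F x, y ∉ C := by
  obtain ⟨A, ⟨hA, hxA⟩, hyA⟩ := hy
  by_contra! h
  exact hxA (hx.2 ⟨A, hA, hyA⟩ (fun C hC ↦ ⟨hC.1, h C hC⟩) ⟨hA, hyA⟩).2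

theorem IsOptimal.exists_containing_superset (hx : IsOptimal F x) (hF : SupClosed F) {A : Set α}
    (hA : A ∈ F) :
    ∃ B ∈ containing F x, A ⊆ B ∧ (⋃₀ avoiding F x ⊆ B → ⋃₀ avoiding F x ⊆ A) := by
  by_cases hS : ⋃₀ avoiding F x ⊆ A
  · obtain ⟨C, hC, hxC⟩ := hx.1
    exact ⟨A ∪ C, ⟨hF hA hC, .inr hxC⟩, Set.subset_union_left, fun _ ↦ hS⟩
  · obtain ⟨y, hyS, hyA⟩ := Set.not_subset.mp hS
    obtain ⟨C, ⟨hC, hxC⟩, hyC⟩ := hx.exists_containing_notMem hyS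
    exact ⟨A ∪ C, ⟨hF hA hC, .inr hxC⟩, Set.subset_union_left,
      fun h ↦ ((h hyS).elim hyA hyC).elim⟩

theorem IsOptimal.isAbundant (hx : IsOptimal F x) (hF : SupClosed F)
    (hdim : krullDim (avoiding F x) ≤ 1) : IsAbundant F x := by
  choose! f hf hAf hSf using fun A (hA : A ∈ F) ↦ hx.exists_containing_superset hF hA
  refine ⟨fun A ↦ ⟨f A, hf A A.2.1⟩, fun ⟨A, hA⟩ ⟨A', hA'⟩ hAA' ↦ Subtype.ext ?_⟩
  replace hAA' : f A = f A' := congrArg Subtype.val hAA'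
  by_contra hne
  have hS : ⋃₀ avoiding F x ⊆ A ∪ A' := Set.sUnion_subset
    (isGreatest_sup_of_krullDim_le_one (supClosed_avoiding hF x) hdim hA hA' hne).2
  have hSfA : ⋃₀ avoiding F x ⊆ f A :=
    hS.trans (Set.union_subset (hAf A hA.1) (hAA' ▸ hAf A' hA'.1))
  have hAS : A = ⋃₀ avoiding F x := (Set.subset_sUnion_of_mem hA).antisymm (hSf A hA.1 hSfA)
  have hAS' : A' = ⋃₀ avoiding F x :=
    (Set.subset_sUnion_of_mem hA').antisymm (hSf A' hA'.1 (hAA' ▸ hSfA))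
  exact hne (hAS.trans hAS'.symm)

end SetFamily

theorem stmt_15_general {α : Type*} (F : Set (Set α)) (hF : SupClosed F) (hdim : krullDim F ≤ 2)
    (hne : (⋃₀ F).Nonempty) :
    (∀ x, IsOptimal F x → IsAbundant F x) ∧ ∃ x, IsOptimal F x ∧ IsAbundant F x := by
  have hfin : krullDim F ≠ ⊤ := (hdim.trans_lt (by decide)).ne
  have hopt (x : α) (hx : IsOptimal F x) : IsAbundant F x := by
    have h_lt : krullDim (avoiding F x) < (1 : ℕ) + 1 :=
      (krullDim_avoiding_lt hF hfin hx.1).trans_le (by simpa [one_add_one_eq_two] using hdim)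
    exact hx.isAbundant hF (by exact_mod_cast ENat.WithBot.lt_add_one_iff.mp h_lt)
  obtain ⟨x, hx⟩ := exists_isOptimal hF hfin hne
  exact ⟨hopt, x, hx, hopt x hx⟩

/-- Every union-closed separating family of dimension two has an abundant
element; in fact every optimal element is abundant. -/
theorem stmt_15 {α : Type*} (F : Set (Set α))
    (hUC : ∀ A ∈ F, ∀ B ∈ F, A ∪ B ∈ F)
    (hsep : ∀ x ∈ ⋃₀ F, ∀ y ∈ ⋃₀ F,
      {A ∈ F | x ∈ A} = {A ∈ F | y ∈ A} → x = y)
    (hdim_le : ∀ A ∈ F, ∀ B ∈ F, ∀ C ∈ F, ∀ D ∈ F,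
      A ⊂ B → B ⊂ C → C ⊂ D → False)
    (hdim_ge : ∃ A ∈ F, ∃ B ∈ F, ∃ C ∈ F, A ⊂ B ∧ B ⊂ C) :
    (∀ x ∈ ⋃₀ F,
      (∀ y ∈ ⋃₀ F, {A ∈ F | x ∈ A} ⊆ {A ∈ F | y ∈ A} →
        {A ∈ F | y ∈ A} = {A ∈ F | x ∈ A}) →
      ∃ f : {A : Set α // A ∈ F ∧ x ∉ A} → {A : Set α // A ∈ F ∧ x ∈ A},
        Function.Injective f) ∧
    ∃ x ∈ ⋃₀ F,
      ∃ f : {A : Set α // A ∈ F ∧ x ∉ A} → {A : Set α // A ∈ F ∧ x ∈ A},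
        Function.Injective f := by
  have hdim : krullDim F ≤ 2 := krullDim_le_two_of_no_four_chain
    fun A B C D hAB hBC hCD ↦ hdim_le A A.2 B B.2 C C.2 D D.2 hAB hBC hCD
  have hne : (⋃₀ F).Nonempty := by
    obtain ⟨_, -, B, -, C, hC, -, hBC⟩ := hdim_ge
    obtain ⟨x, hxC, -⟩ := Set.exists_of_ssubset hBC
    exact ⟨x, C, hC, hxC⟩
  obtain ⟨hopt, x, hx, habundant⟩ :=
    stmt_15_general F (fun A hA B hB ↦ hUC A hA B hB) hdim hne
  exact ⟨fun x hx hmax ↦ hopt x ⟨hx, fun y hy hxy ↦ (hmax y hy hxy).le⟩, x, hx.1, habundant⟩
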